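/- Let n ≥ 1 and let F = n^{-1/2} · Σ_{j=1}^n w_j τ(w_j^{(0)}), where w_1,…,w_n, w_1^{(0)},…,w_n^{(0)} are i.i.d. standard Gaussian random variables and τ ∈ C²(ℝ) satisfies |τ(x)| ≤ a + b|x|^γ, |τ'(x)| ≤ a + b|x|^γ and |τ''(x)| ≤ a + b|x|^γ for all x ∈ ℝ, for some constants a, b, γ ≥ 0. Let σ² = E[τ²(Z)] where Z ~ N(0,1), and let N ~ N(0, σ²). Then for every n ≥ 1, d_{W1}(F, N) ≤ (1/√n) · √(8/(σ²π)) · √(3(1+√2)) · ‖a + b|Z|^γ‖_{L⁴}², where ‖X‖_{L⁴} = (E[X⁴])^{1/4}. -/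

import Mathlib

open MeasureTheory ProbabilityTheory Real

/-- The 1-Wasserstein distance between two distributions:
`sup_h |E[h(X)] − E[h(Y)]|` over 1-Lipschitz functions `h`. -/
noncomputable def dW1 {E : Type*} [MeasurableSpace E] [PseudoMetricSpace E]
    (μ ν : Measure E) : ℝ :=
  ⨆ h : {h : E → ℝ // LipschitzWith 1 h}, |(∫ x, h.1 x ∂μ) - ∫ x, h.1 x ∂ν|

/-!
Conditionally on the inner weights `y`, the output `F` is a centred Gaussian with variance
`S(y) = n⁻¹ ∑ τ(yⱼ)²`, so `F` has the law of `√(S(y)) Z` with `Z` standard Gaussian and independent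
of `y`. Coupling it with `σ Z` gives `d_{W1}(F, N) ≤ E|Z| · E|√S - σ|`. Since `E[S] = σ²` and
`σ |√S - σ| ≤ |S - σ²|`, the last factor is at most `√(Var S) / σ`, and `Var S = Var(τ²) / n`.
-/

open scoped NNReal ENNReal

section Coupling

variable {Ω E : Type*} [MeasurableSpace Ω] [NormedAddCommGroup E] {P : Measure Ω}
  [IsFiniteMeasure P] {X Y : Ω → E}

theorem integrable_comp_of_lipschitzWith {F : Type*} [NormedAddCommGroup F] {K : ℝ≥0} {h : E → F}
    (hh : LipschitzWith K h) (hX : Integrable X P) : Integrable (fun ω ↦ h (X ω)) P := by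
  refine ((hX.norm.const_mul K).add (integrable_const ‖h 0‖)).mono'
    (hh.continuous.comp_aestronglyMeasurable hX.1) (ae_of_all _ fun ω ↦ ?_)
  calc ‖h (X ω)‖ ≤ ‖h (X ω) - h 0‖ + ‖h 0‖ := norm_le_norm_sub_add _ _
    _ ≤ K * ‖X ω‖ + ‖h 0‖ := by simpa using hh.norm_sub_le (X ω) 0

theorem dW1_map_map_le_integral_norm_sub [MeasurableSpace E] [BorelSpace E]
    (hX : Integrable X P) (hY : Integrable Y P) :
    dW1 (P.map X) (P.map Y) ≤ ∫ ω, ‖X ω - Y ω‖ ∂P := by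
  have : Nonempty {h : E → ℝ // LipschitzWith 1 h} := ⟨⟨0, .const' 0⟩⟩
  refine ciSup_le fun ⟨h, hh⟩ ↦ ?_
  have hhX := integrable_comp_of_lipschitzWith hh hX
  have hhY := integrable_comp_of_lipschitzWith hh hY
  rw [integral_map hX.1.aemeasurable hh.continuous.aestronglyMeasurable,
    integral_map hY.1.aemeasurable hh.continuous.aestronglyMeasurable, ← integral_sub hhX hhY]
  calc |∫ ω, (h (X ω) - h (Y ω)) ∂P| ≤ ∫ ω, |h (X ω) - h (Y ω)| ∂P := abs_integral_le_integral_abs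
    _ ≤ ∫ ω, ‖X ω - Y ω‖ ∂P := integral_mono (hhX.sub hhY).abs (hX.sub hY).norm fun ω ↦ by
        simpa using hh.norm_sub_le (X ω) (Y ω)

end Coupling

theorem map_prod_eq_map_prod_of_ae_map_eq {α α' β E : Type*} [MeasurableSpace α]
    [MeasurableSpace α'] [MeasurableSpace β] [TopologicalSpace E]
    [TopologicalSpace.PseudoMetrizableSpace E] [MeasurableSpace E] [BorelSpace E] {μ : Measure α}
    {μ' : Measure α'} {ν : Measure β} [SFinite μ] [SFinite μ'] [SFinite ν] {f : α × β → E}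
    {g : α' × β → E}
    (hf : AEStronglyMeasurable f (μ.prod ν)) (hg : AEStronglyMeasurable g (μ'.prod ν))
    (h : ∀ᵐ y ∂ν, μ.map (fun x ↦ f (x, y)) = μ'.map (fun x ↦ g (x, y))) :
    (μ.prod ν).map f = (μ'.prod ν).map g := by
  refine Measure.ext_of_lintegral _ fun φ hφ ↦ ?_
  rw [lintegral_map' hφ.aemeasurable hf.aemeasurable,
    lintegral_map' hφ.aemeasurable hg.aemeasurable,
    lintegral_prod_symm (fun p ↦ φ (f p)) (hφ.comp_aemeasurable hf.aemeasurable),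
    lintegral_prod_symm (fun p ↦ φ (g p)) (hφ.comp_aemeasurable hg.aemeasurable)]
  refine lintegral_congr_ae ?_
  filter_upwards [hf.prodMk_right, hg.prodMk_right, h] with y hfy hgy hy
  rw [← lintegral_map' hφ.aemeasurable hfy.aemeasurable, hy,
    lintegral_map' hφ.aemeasurable hgy.aemeasurable]

section Gaussian

theorem integral_abs_gaussianReal : ∫ z, |z| ∂gaussianReal 0 1 = √(2 / π) := by
  have gamma : ∫ u in Set.Ioi (0 : ℝ), u * exp (-(1 / 2) * u ^ 2) = 1 := by
    have := integral_rpow_mul_exp_neg_mul_rpow (p := 2) (q := 1) (b := 1 / 2)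
      (by norm_num) (by norm_num) (by norm_num)
    simpa [rpow_neg_one] using this
  have density (z : ℝ) : gaussianPDFReal 0 1 z • |z|
      = (√(2 * π))⁻¹ * (|z| * exp (-(1 / 2) * |z| ^ 2)) := by
    simp only [gaussianPDFReal, smul_eq_mul, sq_abs, NNReal.coe_one]
    ring_nf
  rw [integral_gaussianReal_eq_integral_smul one_ne_zero]
  simp_rw [density]
  rw [integral_comp_abs (f := fun u ↦ (√(2 * π))⁻¹ * (u * exp (-(1 / 2) * u ^ 2))),
    integral_const_mul, gamma, sqrt_div' _ pi_pos.le, sqrt_mul zero_le_two]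
  have := sq_sqrt (zero_le_two (α := ℝ))
  field_simp
  linarith

theorem memLp_const_add_mul_abs_rpow_gaussianReal {m : ℝ} {v : ℝ≥0} {p : ℝ≥0∞} (hp : p ≠ ∞)
    (a b : ℝ) {γ : ℝ} (hγ : 0 ≤ γ) : MemLp (fun z ↦ a + b * |z| ^ γ) p (gaussianReal m v) := by
  refine (memLp_const a).add (MemLp.const_mul ?_ b)
  rcases hγ.eq_or_lt with rfl | hγ
  · simpa using memLp_const (1 : ℝ)
  · have := (memLp_id_gaussianReal' (μ := m) (v := v) (p * ENNReal.ofReal γ)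
      (by finiteness)).norm_rpow_div (ENNReal.ofReal γ)
    rw [ENNReal.mul_div_cancel_right (by simpa using hγ) (by simp)] at this
    simpa [ENNReal.toReal_ofReal hγ.le] using this

theorem map_sqrt_mul_gaussianReal (v : ℝ≥0) :
    (gaussianReal 0 1).map (fun z ↦ √v * z) = gaussianReal 0 v := by
  rw [gaussianReal_map_const_mul]
  congr 1
  · simp
  · ext; simp

theorem map_sum_mul_pi_gaussianReal {ι : Type*} [Fintype ι] (c : ι → ℝ) :
    (Measure.pi fun _ : ι ↦ gaussianReal 0 1).map (fun x ↦ ∑ j, c j * x j)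
      = gaussianReal 0 (∑ j, c j ^ 2).toNNReal := by
  have hmemLp (j : ι) : MemLp (fun z ↦ c j * z) 2 (gaussianReal 0 1) :=
    (memLp_id_gaussianReal' 2 (by simp)).const_mul (c j)
  have hgauss (j : ι) : HasGaussianLaw (fun x : ι → ℝ ↦ c j * x j)
      (Measure.pi fun _ ↦ gaussianReal 0 1) :=
    (measurePreserving_eval (fun _ : ι ↦ gaussianReal 0 1) j).hasLaw.hasGaussianLaw.fun_smul (c j)
  have hindep : iIndepFun (fun j (x : ι → ℝ) ↦ c j * x j) (Measure.pi fun _ ↦ gaussianReal 0 1) :=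
    iIndepFun_pi fun j ↦ (hmemLp j).1.aemeasurable
  have hmean : ∫ x : ι → ℝ, ∑ j, c j * x j ∂(Measure.pi fun _ ↦ gaussianReal 0 1) = 0 := by
    rw [integral_finsetSum _ fun j _ ↦ (hgauss j).integrable]
    simp [integral_const_mul, integral_eval]
  have hvar : Var[fun x : ι → ℝ ↦ ∑ j, c j * x j; Measure.pi fun _ ↦ gaussianReal 0 1]
      = ∑ j, c j ^ 2 := by
    rw [← Finset.sum_fn, variance_sum_pi (X := fun j z ↦ c j * z) hmemLp]
    exact Finset.sum_congr rfl fun j _ ↦ by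
      rw [variance_const_mul, variance_fun_id_gaussianReal, NNReal.coe_one, mul_one]
  rw [(hindep.hasGaussianLaw_fun_sum hgauss).map_eq_gaussianReal, hmean, hvar]

variable {Ω : Type*} [MeasurableSpace Ω] {μ : Measure Ω}

theorem map_sum_mul_prod_gaussianReal [SFinite μ] {ι : Type*} [Fintype ι] {c : ι → Ω → ℝ}
    (hc : ∀ j, AEStronglyMeasurable (c j) μ) :
    ((Measure.pi fun _ : ι ↦ gaussianReal 0 1).prod μ).map (fun p ↦ ∑ j, c j p.2 * p.1 j)
      = ((gaussianReal 0 1).prod μ).map (fun p ↦ √(∑ j, c j p.2 ^ 2) * p.1) := by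
  refine map_prod_eq_map_prod_of_ae_map_eq ?_ ?_ (ae_of_all _ fun y ↦ ?_)
  · exact Finset.aestronglyMeasurable_fun_sum _ fun j _ ↦
      (hc j).comp_snd.mul (by fun_prop)
  · refine AEStronglyMeasurable.mul ?_ (by fun_prop)
    exact continuous_sqrt.comp_aestronglyMeasurable
      (Finset.aestronglyMeasurable_fun_sum _ fun j _ ↦ (hc j).comp_snd.pow 2)
  · dsimp only
    rw [map_sum_mul_pi_gaussianReal, ← map_sqrt_mul_gaussianReal, coe_toNNReal _ (by positivity)]

theorem dW1_map_mul_prod_gaussianReal_le [IsProbabilityMeasure μ] {s : Ω → ℝ}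
    (hs : Integrable s μ) (v : ℝ≥0) :
    dW1 (((gaussianReal 0 1).prod μ).map (fun p ↦ s p.2 * p.1)) (gaussianReal 0 v)
      ≤ √(2 / π) * ∫ y, |s y - √v| ∂μ := by
  have hZ : Integrable (fun z : ℝ ↦ z) (gaussianReal 0 1) :=
    (memLp_id_gaussianReal' 1 (by simp)).integrable le_rfl
  have hsZ : Integrable (fun p : ℝ × Ω ↦ s p.2 * p.1) ((gaussianReal 0 1).prod μ) := by
    simpa only [mul_comm] using hZ.mul_prod hs
  have htarget : gaussianReal 0 v = ((gaussianReal 0 1).prod μ).map (fun p ↦ √v * p.1) := by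
    rw [← map_sqrt_mul_gaussianReal]
    conv_lhs => rw [← (measurePreserving_fst (μ := gaussianReal 0 1) (ν := μ)).map_eq]
    exact Measure.map_map (by fun_prop) measurable_fst
  rw [htarget]
  calc _ ≤ ∫ p : ℝ × Ω, ‖s p.2 * p.1 - √v * p.1‖ ∂(gaussianReal 0 1).prod μ :=
        dW1_map_map_le_integral_norm_sub hsZ ((hZ.comp_fst μ).const_mul (√v))
    _ = ∫ p : ℝ × Ω, |p.1| * |s p.2 - √v| ∂(gaussianReal 0 1).prod μ := by
        simp_rw [← sub_mul, norm_mul, norm_eq_abs, mul_comm]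
    _ = √(2 / π) * ∫ y, |s y - √v| ∂μ := by
        rw [integral_prod_mul (fun z ↦ |z|) (fun y ↦ |s y - √v|), integral_abs_gaussianReal]

end Gaussian

section Moments

theorem sqrt_mul_abs_sqrt_sub_sqrt_le {x y : ℝ} (hx : 0 ≤ x) (hy : 0 ≤ y) :
    √y * |√x - √y| ≤ |x - y| :=
  calc √y * |√x - √y| ≤ (√x + √y) * |√x - √y| := by gcongr; simp
    _ = |(√x + √y) * (√x - √y)| := by
        rw [abs_mul, abs_of_nonneg (add_nonneg (sqrt_nonneg x) (sqrt_nonneg y))]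
    _ = |x - y| := by rw [← sq_sub_sq, sq_sqrt hx, sq_sqrt hy]

theorem rpow_one_div_four_sq {x : ℝ} (hx : 0 ≤ x) : (x ^ ((1 : ℝ) / 4)) ^ 2 = √x := by
  rw [← rpow_mul_natCast hx, sqrt_eq_rpow]
  norm_num

variable {Ω : Type*} [MeasurableSpace Ω] {μ : Measure Ω} {X Y : Ω → ℝ}

theorem memLp_sq {p : ℝ≥0∞} (hX : MemLp X (p * 2) μ) : MemLp (fun ω ↦ X ω ^ 2) p μ := by
  have := hX.norm_rpow_div 2
  rw [ENNReal.mul_div_cancel_right (by simp) (by simp)] at this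
  simpa using this

theorem integral_sq_sq_le_integral_pow_four (hY : MemLp Y 4 μ) (hXY : ∀ᵐ ω ∂μ, |X ω| ≤ Y ω) :
    ∫ ω, (X ω ^ 2) ^ 2 ∂μ ≤ ∫ ω, Y ω ^ 4 ∂μ := by
  have hint : Integrable (fun ω ↦ Y ω ^ 4) μ :=
    (MemLp.integrable_norm_pow (p := 4) (mod_cast hY) four_ne_zero).congr
      (ae_of_all _ fun ω ↦ Even.pow_abs (by decide) (Y ω))
  refine integral_mono_of_nonneg (ae_of_all _ fun ω ↦ sq_nonneg (X ω ^ 2)) hint ?_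
  filter_upwards [hXY] with ω hω
  calc (X ω ^ 2) ^ 2 = |X ω| ^ 4 := by rw [← pow_mul, Even.pow_abs (by decide)]
    _ ≤ Y ω ^ 4 := pow_le_pow_left₀ (abs_nonneg _) hω 4

theorem integrable_sqrt [IsFiniteMeasure μ] (hX : Integrable X μ) :
    Integrable (fun ω ↦ √(X ω)) μ := by
  refine (hX.abs.add (integrable_const 1)).mono' (continuous_sqrt.comp_aestronglyMeasurable hX.1)
    (ae_of_all _ fun ω ↦ ?_)
  rw [norm_eq_abs, abs_of_nonneg (sqrt_nonneg _), Pi.add_apply, sqrt_le_left (by positivity)]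
  nlinarith [le_abs_self (X ω), abs_nonneg (X ω)]

variable [IsProbabilityMeasure μ]

theorem sqrt_variance_sq_le_of_abs_le (hX : AEStronglyMeasurable X μ)
    (hY : MemLp Y 4 μ) (hXY : ∀ᵐ ω ∂μ, |X ω| ≤ Y ω) :
    √Var[fun ω ↦ X ω ^ 2; μ] ≤ ((∫ ω, Y ω ^ 4 ∂μ) ^ ((1 : ℝ) / 4)) ^ 2 := by
  rw [rpow_one_div_four_sq (integral_nonneg fun ω ↦ Even.pow_nonneg (by decide) (Y ω))]
  exact sqrt_le_sqrt <| (variance_le_expectation_sq (hX.pow 2)).trans <|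
    integral_sq_sq_le_integral_pow_four hY hXY

theorem integral_abs_sub_integral_le_sqrt_variance (hX : MemLp X 2 μ) :
    ∫ ω, |X ω - μ[X]| ∂μ ≤ √Var[X; μ] := by
  have hdev : MemLp (fun ω ↦ |X ω - μ[X]|) 2 μ := (hX.sub (memLp_const _)).abs
  have := variance_nonneg (fun ω ↦ |X ω - μ[X]|) μ
  rw [variance_eq_sub hdev] at this
  refine le_sqrt_of_sq_le ?_
  rw [variance_eq_integral hX.1.aemeasurable]
  simpa [sq_abs] using this

theorem integral_abs_sqrt_sub_sqrt_integral_le (hX : MemLp X 2 μ) (hX0 : 0 ≤ᵐ[μ] X) :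
    ∫ ω, |√(X ω) - √μ[X]| ∂μ ≤ √Var[X; μ] / √μ[X] := by
  have hint := hX.integrable one_le_two
  have hmean : 0 ≤ μ[X] := integral_nonneg_of_ae hX0
  rcases hmean.eq_or_lt with hzero | hpos
  · have : X =ᵐ[μ] 0 := (integral_eq_zero_iff_of_nonneg_ae hX0 hint).1 hzero.symm
    have : (fun ω ↦ |√(X ω) - √μ[X]|) =ᵐ[μ] 0 := by
      filter_upwards [this] with ω hω
      simp [hω, ← hzero]
    rw [integral_congr_ae this]
    simp [← hzero]
  · rw [le_div_iff₀' (sqrt_pos.2 hpos), ← integral_const_mul]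
    refine le_trans ?_ (integral_abs_sub_integral_le_sqrt_variance hX)
    refine integral_mono_ae (((integrable_sqrt hint).sub (integrable_const _)).abs.const_mul _)
      (hint.sub (integrable_const _)).abs ?_
    filter_upwards [hX0] with ω hω using sqrt_mul_abs_sqrt_sub_sqrt_le hω hmean

end Moments

section SampleMean

/-- The empirical mean `n⁻¹ ∑ f(yⱼ)` of `f` over a sample `y` of size `n`. Applied to `f = τ²` it is
the conditional variance of the network output given its inner weights. -/
noncomputable def sampleMean {Ω : Type*} (f : Ω → ℝ) {n : ℕ} (y : Fin n → Ω) : ℝ :=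
  (n : ℝ)⁻¹ * ∑ j, f (y j)

variable {Ω : Type*} [MeasurableSpace Ω] {μ : Measure Ω} [IsProbabilityMeasure μ] {f : Ω → ℝ}
  {n : ℕ}

theorem memLp_sampleMean {p : ℝ≥0∞} (hf : MemLp f p μ) :
    MemLp (sampleMean f) p (Measure.pi fun _ : Fin n ↦ μ) :=
  (memLp_finsetSum _ fun j _ ↦
    hf.comp_measurePreserving (measurePreserving_eval (fun _ : Fin n ↦ μ) j)).const_mul _

theorem integral_sampleMean (hn : n ≠ 0) (hf : Integrable f μ) :
    ∫ y, sampleMean f y ∂(Measure.pi fun _ : Fin n ↦ μ) = ∫ x, f x ∂μ := by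
  simp only [sampleMean]
  rw [integral_const_mul, integral_finsetSum _ fun j _ ↦ integrable_comp_eval hf]
  have heval (j : Fin n) : ∫ y : Fin n → Ω, f (y j) ∂(Measure.pi fun _ ↦ μ) = ∫ x, f x ∂μ :=
    integral_comp_eval hf.1
  simp [heval, hn]

theorem variance_sampleMean (hf : MemLp f 2 μ) :
    Var[sampleMean f; Measure.pi fun _ : Fin n ↦ μ] = (n : ℝ)⁻¹ * Var[f; μ] := by
  unfold sampleMean
  rw [variance_const_mul, ← Finset.sum_fn, variance_sum_pi fun _ ↦ hf]
  rcases eq_or_ne n 0 with rfl | hn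
  · simp
  · rw [Finset.sum_const, Finset.card_univ, Fintype.card_fin, nsmul_eq_mul]
    field_simp

end SampleMean

section ShallowNetwork

/-- The output of a shallow network of width `n` with activation `τ`, as a function of its outer
weights `ω.1` and inner weights `ω.2`. The inner weights may live in any space, so that `τ` can
absorb the input and the inner affine map. -/
noncomputable def shallowNetwork {Ω : Type*} (τ : Ω → ℝ) {n : ℕ} (ω : (Fin n → ℝ) × (Fin n → Ω)) :
    ℝ :=
  (√n)⁻¹ * ∑ j, ω.1 j * τ (ω.2 j)

variable {Ω : Type*} [MeasurableSpace Ω] {μ : Measure Ω} [IsProbabilityMeasure μ] {τ : Ω → ℝ}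
  {n : ℕ}

theorem map_shallowNetwork_eq_map_sqrt_sampleMean_mul (hτ : AEStronglyMeasurable τ μ) :
    ((Measure.pi fun _ : Fin n ↦ gaussianReal 0 1).prod (Measure.pi fun _ : Fin n ↦ μ)).map
        (shallowNetwork τ)
      = ((gaussianReal 0 1).prod (Measure.pi fun _ : Fin n ↦ μ)).map
        (fun p ↦ √(sampleMean (fun x ↦ τ x ^ 2) p.2) * p.1) := by
  have hc (j : Fin n) : AEStronglyMeasurable (fun y : Fin n → Ω ↦ (√n)⁻¹ * τ (y j))
      (Measure.pi fun _ ↦ μ) :=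
    (hτ.comp_measurePreserving (measurePreserving_eval (fun _ : Fin n ↦ μ) j)).const_mul _
  convert map_sum_mul_prod_gaussianReal hc using 4 with ω p
  · rw [shallowNetwork, Finset.mul_sum]
    exact Finset.sum_congr rfl fun j _ ↦ by ring
  · simp [sampleMean, mul_pow, Finset.mul_sum]

theorem dW1_shallowNetwork_gaussianReal_le (hτ : MemLp τ 4 μ) (hn : n ≠ 0) :
    dW1
      (((Measure.pi fun _ : Fin n ↦ gaussianReal 0 1).prod (Measure.pi fun _ : Fin n ↦ μ)).map
        (shallowNetwork τ))
      (gaussianReal 0 (∫ x, τ x ^ 2 ∂μ).toNNReal)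
      ≤ (√n)⁻¹ * √(2 / ((∫ x, τ x ^ 2 ∂μ) * π)) * √Var[fun x ↦ τ x ^ 2; μ] := by
  have hsq : MemLp (fun x ↦ τ x ^ 2) 2 μ := memLp_sq (by convert hτ; norm_num)
  have hS : MemLp (sampleMean fun x ↦ τ x ^ 2) 2 (Measure.pi fun _ : Fin n ↦ μ) :=
    memLp_sampleMean hsq
  have hS0 : 0 ≤ᵐ[Measure.pi fun _ : Fin n ↦ μ] sampleMean fun x ↦ τ x ^ 2 :=
    ae_of_all _ fun y ↦ by simp only [sampleMean, Pi.zero_apply]; positivity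
  have hmean := integral_sampleMean hn (hsq.integrable one_le_two)
  have hdev := integral_abs_sqrt_sub_sqrt_integral_le hS hS0
  rw [hmean, variance_sampleMean hsq] at hdev
  rw [map_shallowNetwork_eq_map_sqrt_sampleMean_mul hτ.1]
  have hv : 0 ≤ ∫ x, τ x ^ 2 ∂μ := by positivity
  set v := ∫ x, τ x ^ 2 ∂μ
  set V := Var[fun x ↦ τ x ^ 2; μ]
  calc _ ≤ √(2 / π) * ∫ y, |√(sampleMean (fun x ↦ τ x ^ 2) y) - √v|
          ∂(Measure.pi fun _ : Fin n ↦ μ) := by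
        simpa only [coe_toNNReal _ hv] using dW1_map_mul_prod_gaussianReal_le
          (integrable_sqrt (hS.integrable one_le_two)) v.toNNReal
    _ ≤ √(2 / π) * (√((n : ℝ)⁻¹ * V) / √v) := by gcongr
    _ = (√n)⁻¹ * √(2 / (v * π)) * √V := by
        rw [sqrt_mul (by positivity), sqrt_inv, mul_comm v, ← div_div, sqrt_div' _ hv]
        ring

theorem shallow_nn_wasserstein_bound_general {g : Ω → ℝ} (hτ : AEStronglyMeasurable τ μ)
    (hg : MemLp g 4 μ) (hτg : ∀ᵐ x ∂μ, |τ x| ≤ g x) (hn : n ≠ 0) :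
    dW1
      (((Measure.pi fun _ : Fin n ↦ gaussianReal 0 1).prod (Measure.pi fun _ : Fin n ↦ μ)).map
        (shallowNetwork τ))
      (gaussianReal 0 (∫ x, τ x ^ 2 ∂μ).toNNReal)
      ≤ (√n)⁻¹ * √(2 / ((∫ x, τ x ^ 2 ∂μ) * π)) * ((∫ x, g x ^ 4 ∂μ) ^ ((1 : ℝ) / 4)) ^ 2 := by
  refine (dW1_shallowNetwork_gaussianReal_le (hg.mono' hτ hτg) hn).trans ?_
  gcongr
  exact sqrt_variance_sq_le_of_abs_le hτ hg hτg

end ShallowNetwork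

theorem sqrt_two_div_le_sqrt_eight_div_mul {x : ℝ} (hx : 0 ≤ x) :
    √(2 / x) ≤ √(8 / x) * √(3 * (1 + √2)) :=
  calc √(2 / x) ≤ √(8 / x) := by gcongr; norm_num
    _ ≤ √(8 / x) * √(3 * (1 + √2)) :=
        le_mul_of_one_le_right (sqrt_nonneg _) (one_le_sqrt.2 (by linarith [sqrt_nonneg 2]))

theorem shallow_nn_wasserstein_bound
    (τ : ℝ → ℝ) (a b γ : ℝ) (ha : 0 ≤ a) (hb : 0 ≤ b) (hγ : 0 ≤ γ)
    (hτ : ContDiff ℝ 2 τ)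
    (hτ0 : ∀ x : ℝ, |τ x| ≤ a + b * |x| ^ γ)
    (hτ1 : ∀ x : ℝ, |deriv τ x| ≤ a + b * |x| ^ γ)
    (hτ2 : ∀ x : ℝ, |deriv (deriv τ) x| ≤ a + b * |x| ^ γ)
    (n : ℕ) (hn : 1 ≤ n) :
    dW1
      (Measure.map
        (fun ω : (Fin n → ℝ) × (Fin n → ℝ) =>
          (Real.sqrt n)⁻¹ * ∑ j, ω.1 j * τ (ω.2 j))
        ((Measure.pi fun _ : Fin n => gaussianReal 0 1).prod
          (Measure.pi fun _ : Fin n => gaussianReal 0 1)))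
      (gaussianReal 0 (∫ z, (τ z) ^ 2 ∂gaussianReal 0 1).toNNReal)
      ≤ (Real.sqrt n)⁻¹
        * Real.sqrt (8 / ((∫ z, (τ z) ^ 2 ∂gaussianReal 0 1) * π))
        * Real.sqrt (3 * (1 + Real.sqrt 2))
        * ((∫ z, (a + b * |z| ^ γ) ^ 4 ∂gaussianReal 0 1) ^ ((1:ℝ)/4)) ^ 2 := by
  refine (shallow_nn_wasserstein_bound_general hτ.continuous.aestronglyMeasurable
    (memLp_const_add_mul_abs_rpow_gaussianReal (by simp) a b hγ) (ae_of_all _ hτ0)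
    (Nat.one_le_iff_ne_zero.1 hn)).trans ?_
  rw [mul_assoc (√n)⁻¹ √(8 / _)]
  gcongr
  exact sqrt_two_div_le_sqrt_eight_div_mul (by positivity)
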